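/- Let Ω ⊂ ℝⁿ be a bounded open set with diameter < 1 and k ∈ ℕ. For every w ∈ L²_loc(Ω) with ‖w‖_k² := ∫_Ω |w|² d(z,∂Ω)^{2k} dλ < +∞, there exists v ∈ L²_loc(Ω) solving Δv = ∂w/∂x₁ in Ω (in the sense of distributions, after extending w to a compactly supported distribution w̃ of order ≤ k on ℝⁿ and setting v = (∂E/∂x₁) ⋆ w̃ restricted to Ω, where E is the fundamental solution of Δ) such that ‖v‖²_{k+n−1} := ∫_Ω |v|² d(z,∂Ω)^{2(k+n−1)} dλ ≤ C(Ω,k,n) ‖w‖_k². -/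

import Mathlib

open MeasureTheory Metric
noncomputable section

abbrev En (n : ℕ) := EuclideanSpace ℝ (Fin n)

def IsTest {n : ℕ} (φ : En n → ℝ) : Prop :=
  ContDiff ℝ (⊤ : ℕ∞) φ ∧ HasCompactSupport φ

noncomputable def lapR {n : ℕ} (f : En n → ℝ) (x : En n) : ℝ :=
  ∑ i : Fin n,
    iteratedFDeriv ℝ 2 f x ![EuclideanSpace.single i 1, EuclideanSpace.single i 1]

/-- coordinate partial derivative -/
def pd {n : ℕ} (i : Fin n) (f : En n → ℝ) (x : En n) : ℝ :=
  fderiv ℝ f x (EuclideanSpace.single i 1)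

/-- smoothness -/
abbrev Sm {n : ℕ} (f : En n → ℝ) : Prop := ContDiff ℝ (⊤ : ℕ∞) f

/-- Laplacian as iterated partial derivatives -/
def Lp0 {n : ℕ} (φ : En n → ℝ) (x : En n) : ℝ := ∑ i, pd i (pd i φ) x

/-- radial derivative -/
def Nn {n : ℕ} (p : En n) (φ : En n → ℝ) (x : En n) : ℝ := ∑ l, (x l - p l) * pd l φ x

/-- squared gradient -/
def Qn {n : ℕ} (φ : En n → ℝ) (x : En n) : ℝ := ∑ l, pd l φ x ^ 2

variable {n : ℕ}

lemma Sm.diff {f : En n → ℝ} (hf : Sm f) (x : En n) : DifferentiableAt ℝ f x :=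
  (hf.differentiable (by simp)) x

lemma Sm.pd {f : En n → ℝ} (hf : Sm f) (i : Fin n) : Sm (pd i f) := by
  have := (ContDiff.fderiv_right (m := ((⊤ : ℕ∞) : WithTop ℕ∞)) hf (by simp)).clm_apply
    (contDiff_const (c := (EuclideanSpace.single i 1 : En n)))
  exact this

lemma sm_coord (p : En n) (i : Fin n) : Sm (fun x : En n => x i - p i) := by
  unfold Sm
  fun_prop

lemma Sm.Lp0 {f : En n → ℝ} (hf : Sm f) : Sm (Lp0 f) := by
  unfold Sm _root_.Lp0
  exact ContDiff.sum fun i _ => (hf.pd i).pd i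

lemma Sm.Qn {f : En n → ℝ} (hf : Sm f) : Sm (Qn f) := by
  unfold Sm _root_.Qn
  exact ContDiff.sum fun i _ => (hf.pd i).pow 2

lemma Sm.Nn {f : En n → ℝ} (hf : Sm f) (p : En n) : Sm (Nn p f) := by
  unfold Sm _root_.Nn
  exact ContDiff.sum fun i _ => (sm_coord p i).mul (hf.pd i)

lemma pd_mul {f g : En n → ℝ} (hf : Sm f) (hg : Sm g) (i : Fin n) (x : En n) :
    pd i (fun x => f x * g x) x = pd i f x * g x + f x * pd i g x := by
  unfold pd
  rw [fderiv_fun_mul (hf.diff x) (hg.diff x)]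
  simp
  ring

lemma pd_add {f g : En n → ℝ} (hf : Sm f) (hg : Sm g) (i : Fin n) (x : En n) :
    pd i (fun x => f x + g x) x = pd i f x + pd i g x := by
  unfold pd
  rw [fderiv_fun_add (hf.diff x) (hg.diff x)]
  simp

lemma pd_const_mul {f : En n → ℝ} (c : ℝ) (hf : Sm f) (i : Fin n) (x : En n) :
    pd i (fun x => c * f x) x = c * pd i f x := by
  unfold pd
  rw [fderiv_const_mul (hf.diff x)]
  simp

lemma pd_pow {f : En n → ℝ} (hf : Sm f) (b : ℕ) (i : Fin n) (x : En n) :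
    pd i (fun x => f x ^ b) x = b * f x ^ (b - 1) * pd i f x := by
  unfold pd
  rw [fderiv_fun_pow _ (hf.diff x)]
  simp

lemma pd_sum {f : Fin n → En n → ℝ} (hf : ∀ l, Sm (f l)) (i : Fin n) (x : En n) :
    pd i (fun x => ∑ l, f l x) x = ∑ l, pd i (f l) x := by
  unfold pd
  rw [fderiv_fun_sum fun l _ => (hf l).diff x]
  simp

lemma pd_coord (p : En n) (i l : Fin n) (x : En n) :
    pd i (fun x : En n => x l - p l) x = if i = l then 1 else 0 := by
  unfold pd
  have : HasFDerivAt (fun x : En n => x l - p l) (EuclideanSpace.proj l : En n →L[ℝ] ℝ) x :=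
    ((EuclideanSpace.proj l : En n →L[ℝ] ℝ).hasFDerivAt).sub_const _
  rw [this.fderiv]
  simp [eq_comm]

lemma pd_comm {f : En n → ℝ} (hf : Sm f) (i l : Fin n) (x : En n) :
    pd i (pd l f) x = pd l (pd i f) x := by
  have h : ∀ i l, pd i (pd l f) x = fderiv ℝ (fderiv ℝ f) x (EuclideanSpace.single i 1)
      (EuclideanSpace.single l 1) := by
    intro i l
    unfold pd
    have hd : DifferentiableAt ℝ (fderiv ℝ f) x :=
      (ContDiff.fderiv_right (m := ((⊤ : ℕ∞) : WithTop ℕ∞)) hf (by simp)).differentiable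
        (by simp) x
    rw [fderiv_clm_apply hd (differentiableAt_const _)]
    simp
  rw [h, h]
  exact (hf.contDiffAt.isSymmSndFDerivAt (by simp; exact WithTop.coe_le_coe.2 le_top)).eq _ _

lemma lapR_eq {f : En n → ℝ} (hf : Sm f) : lapR f = Lp0 f := by
  funext x
  unfold lapR Lp0
  refine Finset.sum_congr rfl fun i _ => ?_
  rw [iteratedFDeriv_two_apply]
  unfold pd
  have hd : DifferentiableAt ℝ (fderiv ℝ f) x :=
      (ContDiff.fderiv_right (m := ((⊤ : ℕ∞) : WithTop ℕ∞)) hf (by simp)).differentiable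
        (by simp) x
  rw [fderiv_clm_apply hd (differentiableAt_const _)]
  simp

lemma pd_zero {f : En n → ℝ} (i : Fin n) {x : En n} (hx : x ∉ tsupport f) : pd i f x = 0 := by
  unfold pd
  rw [fderiv_of_notMem_tsupport ℝ hx]
  simp

lemma tsupport_pd (f : En n → ℝ) (i : Fin n) : tsupport (pd i f) ⊆ tsupport f :=
  tsupport_fderiv_apply_subset ℝ _

lemma pd2_zero {f : En n → ℝ} (i l : Fin n) {x : En n} (hx : x ∉ tsupport f) :
    pd i (pd l f) x = 0 :=
  pd_zero i fun h => hx (tsupport_pd f l h)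

lemma Lp0_zero {f : En n → ℝ} {x : En n} (hx : x ∉ tsupport f) : Lp0 f x = 0 :=
  Finset.sum_eq_zero fun i _ => pd2_zero i i hx

lemma Nn_zero {f : En n → ℝ} (p : En n) {x : En n} (hx : x ∉ tsupport f) : Nn p f x = 0 :=
  Finset.sum_eq_zero fun i _ => by rw [pd_zero i hx, mul_zero]

lemma Qn_zero {f : En n → ℝ} {x : En n} (hx : x ∉ tsupport f) : Qn f x = 0 :=
  Finset.sum_eq_zero fun i _ => by rw [pd_zero i hx]; simp

lemma int_pd {f : En n → ℝ} (hf : Sm f) (hc : HasCompactSupport f) (i : Fin n) :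
    Integrable (pd i f) ∧ ∫ x, pd i f x = 0 := by
  have hI : Integrable (pd i f) :=
    (hf.pd i).continuous.integrable_of_hasCompactSupport
      (hc.of_isClosed_subset (isClosed_tsupport _) (tsupport_pd f i))
  refine ⟨hI, ?_⟩
  have h := integral_mul_fderiv_eq_neg_fderiv_mul_of_integrable (μ := (volume : Measure (En n)))
    (f := fun _ => (1 : ℝ)) (g := f) (v := EuclideanSpace.single i 1)
    (by simp) (by simp only [one_mul]; exact hI)
    (by simpa using hf.continuous.integrable_of_hasCompactSupport hc)
    (fun x _ => differentiableAt_const _) (fun x _ => hf.diff x)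
  simpa [pd] using h

lemma int_div {F : Fin n → En n → ℝ} (hF : ∀ i, Sm (F i)) (hc : ∀ i, HasCompactSupport (F i)) :
    ∫ x, ∑ i, pd i (F i) x = 0 := by
  rw [integral_finsetSum _ fun i _ => (int_pd (hF i) (hc i) i).1]
  exact Finset.sum_eq_zero fun i _ => (int_pd (hF i) (hc i) i).2

lemma pd_Nn {φ : En n → ℝ} (hφ : Sm φ) (p : En n) (i : Fin n) (x : En n) :
    pd i (Nn p φ) x = pd i φ x + ∑ l, (x l - p l) * pd i (pd l φ) x := by
  unfold Nn
  rw [pd_sum (fun l => (sm_coord p l).mul (hφ.pd l))]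
  simp_rw [pd_mul (sm_coord p _) (hφ.pd _), pd_coord]
  rw [Finset.sum_add_distrib]
  simp

lemma pd_Qn {φ : En n → ℝ} (hφ : Sm φ) (i : Fin n) (x : En n) :
    pd i (Qn φ) x = 2 * ∑ l, pd l φ x * pd i (pd l φ) x := by
  unfold Qn
  rw [pd_sum (fun l => (hφ.pd l).pow 2)]
  simp_rw [pd_pow (hφ.pd _), Finset.mul_sum]
  refine Finset.sum_congr rfl fun l _ => ?_
  simp
  ring

/-- the weight `s` is smooth and equals `|x-p|⁻²` near the support of `φ` -/
structure Wt (p : En n) (φ s : En n → ℝ) : Prop where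
  sm : Sm φ
  cs : HasCompactSupport φ
  ss : Sm s
  pos : ∀ x, 0 < s x
  one : ∀ x ∈ tsupport φ, ∀ᶠ z in nhds x, s z * ∑ i, (z i - p i) ^ 2 = 1

variable {p : En n} {φ s : En n → ℝ}

lemma Wt.eq1 (h : Wt p φ s) {x : En n} (hx : x ∈ tsupport φ) :
    s x * ∑ i, (x i - p i) ^ 2 = 1 := (h.one x hx).self_of_nhds

lemma Wt.pds (h : Wt p φ s) {x : En n} (hx : x ∈ tsupport φ) (i : Fin n) :
    pd i s x = -2 * (x i - p i) * s x ^ 2 := by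
  have h0 : pd i (fun z => s z * ∑ i, (z i - p i) ^ 2) x = 0 := by
    unfold pd
    have : (fun z => s z * ∑ i, (z i - p i) ^ 2) =ᶠ[nhds x] fun _ => (1 : ℝ) := h.one x hx
    rw [this.fderiv_eq]
    simp
  rw [pd_mul h.ss (ContDiff.sum fun i _ => (sm_coord p i).pow 2),
    pd_sum (fun l => (sm_coord p l).pow 2)] at h0
  simp_rw [pd_pow (sm_coord p _), pd_coord] at h0
  simp at h0
  have h1 := h.eq1 hx
  linear_combination s x * h0 - pd i s x * h1

lemma Wt.pdh (h : Wt p φ s) {x : En n} (hx : x ∈ tsupport φ) (i : Fin n) (b : ℕ) :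
    pd i (fun z => s z ^ b) x = -2 * b * (x i - p i) * s x ^ (b + 1) := by
  rw [pd_pow h.ss, h.pds hx]
  rcases b with _ | b
  · simp
  · simp
    ring

lemma Wt.int (h : Wt p φ s) {f : En n → ℝ} (hf : Sm f) (h0 : ∀ x, x ∉ tsupport φ → f x = 0) :
    Integrable f :=
  hf.continuous.integrable_of_hasCompactSupport (HasCompactSupport.intro h.cs.isCompact h0)

lemma Wt.i3 (h : Wt p φ s) (b : ℕ) :
    (∫ x, s x ^ b * φ x * Lp0 φ x) + (∫ x, s x ^ b * Qn φ x)
      - 2 * b * ∫ x, s x ^ (b + 1) * φ x * Nn p φ x = 0 := by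
  have hz : ∀ x, x ∉ tsupport φ → φ x = 0 := fun x hx => image_eq_zero_of_notMem_tsupport hx
  have key := int_div (F := fun i x => (s x ^ b * φ x) * pd i φ x)
    (fun i => ((h.ss.pow b).mul h.sm).mul (h.sm.pd i))
    (fun i => HasCompactSupport.intro h.cs.isCompact fun x hx => by rw [hz x hx]; simp)
  have e : ∀ x, ∑ i, pd i (fun x => (s x ^ b * φ x) * pd i φ x) x =
      s x ^ b * φ x * Lp0 φ x + s x ^ b * Qn φ x
      - (2 * b) * (s x ^ (b + 1) * φ x * Nn p φ x) := by
    intro x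
    simp_rw [pd_mul ((h.ss.pow b).mul h.sm) (h.sm.pd _), pd_mul (h.ss.pow b) h.sm]
    by_cases hx : x ∈ tsupport φ
    · simp_rw [h.pdh hx]
      unfold Lp0 Qn Nn
      simp_rw [Finset.mul_sum, ← Finset.sum_add_distrib, ← Finset.sum_sub_distrib]
      exact Finset.sum_congr rfl fun i _ => by ring
    · simp [hz x hx, pd_zero _ hx, Lp0_zero hx, Qn_zero hx, Nn_zero p hx]
  simp_rw [e] at key
  have i1 : Integrable (fun x => s x ^ b * φ x * Lp0 φ x) :=
    h.int (((h.ss.pow b).mul h.sm).mul h.sm.Lp0) fun x hx => by rw [hz x hx]; simp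
  have i2 : Integrable (fun x => s x ^ b * Qn φ x) :=
    h.int (((h.ss.pow b)).mul h.sm.Qn) fun x hx => by rw [Qn_zero hx]; simp
  have i3 : Integrable (fun x => s x ^ (b + 1) * φ x * Nn p φ x) :=
    h.int (((h.ss.pow (b+1)).mul h.sm).mul (h.sm.Nn p)) fun x hx => by rw [hz x hx]; simp
  have i12 : Integrable (fun x => s x ^ b * φ x * Lp0 φ x + s x ^ b * Qn φ x) := i1.add i2
  rw [integral_sub i12 (i3.const_mul _), integral_add i1 i2, integral_const_mul] at key
  exact key

lemma Wt.i4 (h : Wt p φ s) (b : ℕ) :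
    ((n : ℝ) - 2 * b) * (∫ x, s x ^ b * φ x ^ 2)
      + 2 * ∫ x, s x ^ b * φ x * Nn p φ x = 0 := by
  have hz : ∀ x, x ∉ tsupport φ → φ x = 0 := fun x hx => image_eq_zero_of_notMem_tsupport hx
  have key := int_div (F := fun i x => (s x ^ b * φ x ^ 2) * (x i - p i))
    (fun i => ((h.ss.pow b).mul (h.sm.pow 2)).mul (sm_coord p i))
    (fun i => HasCompactSupport.intro h.cs.isCompact fun x hx => by rw [hz x hx]; simp)
  have e : ∀ x, ∑ i, pd i (fun x => (s x ^ b * φ x ^ 2) * (x i - p i)) x =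
      ((n : ℝ) - 2 * b) * (s x ^ b * φ x ^ 2)
      + 2 * (s x ^ b * φ x * Nn p φ x) := by
    intro x
    simp_rw [pd_mul ((h.ss.pow b).mul (h.sm.pow 2)) (sm_coord p _),
      pd_mul (h.ss.pow b) (h.sm.pow 2), pd_pow h.sm, pd_coord]
    by_cases hx : x ∈ tsupport φ
    · simp_rw [h.pdh hx]
      have h1 := h.eq1 hx
      unfold Nn
      refine (Finset.sum_congr rfl (g := fun i =>
          (-2 * (b:ℝ) * s x ^ (b + 1) * φ x ^ 2) * (x i - p i) ^ 2 +
          (2 * (s x ^ b * φ x)) * ((x i - p i) * pd i φ x) + s x ^ b * φ x ^ 2)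
          fun i _ => ?_).trans ?_
      · simp
        ring
      simp_rw [Finset.sum_add_distrib, ← Finset.mul_sum]
      simp
      linear_combination (-2 * (b:ℝ) * s x ^ b * φ x ^ 2) * h1
    · simp [hz x hx]
  simp_rw [e] at key
  have i1 : Integrable (fun x => s x ^ b * φ x ^ 2) :=
    h.int (((h.ss.pow b).mul (h.sm.pow 2))) fun x hx => by rw [hz x hx]; simp
  have i3 : Integrable (fun x => s x ^ b * φ x * Nn p φ x) :=
    h.int (((h.ss.pow b).mul h.sm).mul (h.sm.Nn p)) fun x hx => by rw [hz x hx]; simp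
  rw [integral_add (i1.const_mul _) (i3.const_mul _), integral_const_mul,
    integral_const_mul] at key
  exact key

lemma Wt.i12 (h : Wt p φ s) (b : ℕ) :
    (∫ x, s x ^ b * Nn p φ x * Lp0 φ x) - 2 * b * (∫ x, s x ^ (b + 1) * Nn p φ x ^ 2)
      + (1 + b - (n : ℝ) / 2) * ∫ x, s x ^ b * Qn φ x = 0 := by
  have hz : ∀ x, x ∉ tsupport φ → φ x = 0 := fun x hx => image_eq_zero_of_notMem_tsupport hx
  have sA : ∀ i, Sm (fun x => (s x ^ b * Nn p φ x) * pd i φ x) := fun i =>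
    ((h.ss.pow b).mul (h.sm.Nn p)).mul (h.sm.pd i)
  have sB : ∀ i, Sm (fun x => (s x ^ b * Qn φ x) * (x i - p i)) := fun i =>
    ((h.ss.pow b).mul h.sm.Qn).mul (sm_coord p i)
  have sB' : ∀ i, Sm (fun x => (-1/2 : ℝ) * ((s x ^ b * Qn φ x) * (x i - p i))) := fun i =>
    contDiff_const.mul (sB i)
  have key := int_div (F := fun i x => (s x ^ b * Nn p φ x) * pd i φ x +
      (-1/2) * ((s x ^ b * Qn φ x) * (x i - p i)))
    (fun i => (sA i).add (sB' i))
    (fun i => HasCompactSupport.intro h.cs.isCompact fun x hx => by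
      rw [Nn_zero p hx, Qn_zero hx]; simp)
  have e : ∀ x, ∑ i, pd i (fun x => (s x ^ b * Nn p φ x) * pd i φ x +
      (-1/2) * ((s x ^ b * Qn φ x) * (x i - p i))) x =
      s x ^ b * Nn p φ x * Lp0 φ x - (2 * b) * (s x ^ (b + 1) * Nn p φ x ^ 2)
      + (1 + b - (n : ℝ) / 2) * (s x ^ b * Qn φ x) := by
    intro x
    simp_rw [pd_add (sA _) (sB' _), pd_const_mul _ (sB _)]
    simp_rw [pd_mul ((h.ss.pow b).mul (h.sm.Nn p)) (h.sm.pd _),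
      pd_mul ((h.ss.pow b).mul h.sm.Qn) (sm_coord p _),
      pd_mul (h.ss.pow b) (h.sm.Nn p), pd_mul (h.ss.pow b) h.sm.Qn, pd_coord,
      pd_Nn h.sm, pd_Qn h.sm]
    by_cases hx : x ∈ tsupport φ
    · simp_rw [h.pdh hx]
      have h1 := h.eq1 hx
      have hsym : ∑ i, (∑ l, (x l - p l) * pd i (pd l φ) x) * pd i φ x =
          ∑ i, (∑ l, pd l φ x * pd i (pd l φ) x) * (x i - p i) := by
        simp_rw [Finset.sum_mul]
        rw [Finset.sum_comm]
        refine Finset.sum_congr rfl fun i _ => Finset.sum_congr rfl fun l _ => ?_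
        rw [pd_comm h.sm l i]
        ring
      set A : Fin n → ℝ := fun i => ∑ l, (x l - p l) * pd i (pd l φ) x with hA
      set B : Fin n → ℝ := fun i => ∑ l, pd l φ x * pd i (pd l φ) x with hB
      refine (Finset.sum_congr rfl (g := fun i =>
          (-2 * (b:ℝ) * s x ^ (b + 1) * Nn p φ x) * ((x i - p i) * pd i φ x) +
          s x ^ b * pd i φ x ^ 2 + s x ^ b * (A i * pd i φ x) +
          s x ^ b * Nn p φ x * pd i (pd i φ) x +
          (b * s x ^ (b + 1) * Qn φ x) * (x i - p i) ^ 2 +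
          (- s x ^ b) * (B i * (x i - p i)) + (-1 / 2) * (s x ^ b * Qn φ x))
          fun i _ => ?_).trans ?_
      · simp only [if_true, hA, hB]
        ring
      simp_rw [Finset.sum_add_distrib, ← Finset.mul_sum]
      rw [hsym]
      have e1 : ∑ i, (x i - p i) * pd i φ x = Nn p φ x := rfl
      have e2 : ∑ i, pd i φ x ^ 2 = Qn φ x := rfl
      have e3 : ∑ i, pd i (pd i φ) x = Lp0 φ x := rfl
      rw [e1, e2, e3]
      simp
      linear_combination ((b:ℝ) * s x ^ b * Qn φ x) * h1
    · simp [pd_zero _ hx, pd2_zero _ _ hx, Lp0_zero hx, Qn_zero hx, Nn_zero p hx]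
  simp_rw [e] at key
  have i1 : Integrable (fun x => s x ^ b * Nn p φ x * Lp0 φ x) :=
    h.int (((h.ss.pow b).mul (h.sm.Nn p)).mul h.sm.Lp0) fun x hx => by rw [Lp0_zero hx]; simp
  have i2 : Integrable (fun x => s x ^ b * Qn φ x) :=
    h.int (((h.ss.pow b)).mul h.sm.Qn) fun x hx => by rw [Qn_zero hx]; simp
  have i3 : Integrable (fun x => s x ^ (b + 1) * Nn p φ x ^ 2) :=
    h.int (((h.ss.pow (b+1))).mul ((h.sm.Nn p).pow 2)) fun x hx => by rw [Nn_zero p hx]; simp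
  have i13 : Integrable (fun x => s x ^ b * Nn p φ x * Lp0 φ x -
      (2 * b) * (s x ^ (b + 1) * Nn p φ x ^ 2)) := i1.sub (i3.const_mul _)
  rw [integral_add i13 (i2.const_mul _), integral_sub i1 (i3.const_mul _),
    integral_const_mul, integral_const_mul] at key
  exact key

set_option maxHeartbeats 2000000 in
lemma Wt.main (h : Wt p φ s) (m : ℕ) (R : ℝ) (hR : 0 ≤ R) (hRs : ∀ x ∈ tsupport φ, 1 ≤ R * s x) :
    ∫ x, s x ^ m * Qn φ x ≤
      ((2 * m * |1 + m - (n : ℝ) / 2| + R / 2) * R + 1 / 2) * ∫ x, s x ^ m * Lp0 φ x ^ 2 := by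
  have hz : ∀ x, x ∉ tsupport φ → φ x = 0 := fun x hx => image_eq_zero_of_notMem_tsupport hx
  set β : ℝ := 2 + m - (n : ℝ) / 2 with hβ
  have sN := h.sm.Nn p
  have sL := h.sm.Lp0
  have J1 : Integrable (fun x => s x ^ (m+1) * Nn p φ x * Lp0 φ x) :=
    h.int (((h.ss.pow (m+1)).mul sN).mul sL) fun x hx => by rw [Lp0_zero hx]; simp
  have J2 : Integrable (fun x => s x ^ (m+2) * Nn p φ x ^ 2) :=
    h.int ((h.ss.pow (m+2)).mul (sN.pow 2)) fun x hx => by rw [Nn_zero p hx]; simp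
  have J4 : Integrable (fun x => s x ^ (m+1) * φ x * Lp0 φ x) :=
    h.int (((h.ss.pow (m+1)).mul h.sm).mul sL) fun x hx => by rw [Lp0_zero hx]; simp
  have J5 : Integrable (fun x => s x ^ (m+2) * φ x * Nn p φ x) :=
    h.int (((h.ss.pow (m+2)).mul h.sm).mul sN) fun x hx => by rw [hz x hx]; simp
  have J6 : Integrable (fun x => s x ^ (m+2) * φ x ^ 2) :=
    h.int ((h.ss.pow (m+2)).mul (h.sm.pow 2)) fun x hx => by rw [hz x hx]; simp
  have J7 : Integrable (fun x => s x ^ (m+1) * φ x * Nn p φ x) :=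
    h.int (((h.ss.pow (m+1)).mul h.sm).mul sN) fun x hx => by rw [hz x hx]; simp
  have J8 : Integrable (fun x => s x ^ (m+1) * φ x ^ 2) :=
    h.int ((h.ss.pow (m+1)).mul (h.sm.pow 2)) fun x hx => by rw [hz x hx]; simp
  have J10 : Integrable (fun x => s x ^ m * φ x * Lp0 φ x) :=
    h.int (((h.ss.pow m).mul h.sm).mul sL) fun x hx => by rw [Lp0_zero hx]; simp
  have JD : Integrable (fun x => s x ^ m * Lp0 φ x ^ 2) :=
    h.int ((h.ss.pow m).mul (sL.pow 2)) fun x hx => by rw [Lp0_zero hx]; simp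
  have sG : Sm (fun x => Nn p φ x - β * φ x) := sN.sub (contDiff_const.mul h.sm)
  have JG : Integrable (fun x => s x ^ (m+2) * (Nn p φ x - β * φ x) ^ 2) :=
    h.int ((h.ss.pow (m+2)).mul (sG.pow 2)) fun x hx => by rw [Nn_zero p hx, hz x hx]; simp
  have JGL : Integrable (fun x => s x ^ (m+1) * (Nn p φ x - β * φ x) * Lp0 φ x) :=
    h.int (((h.ss.pow (m+1)).mul sG).mul sL) fun x hx => by rw [Lp0_zero hx]; simp
  have JGφ : Integrable (fun x => s x ^ (m+1) * φ x * (Nn p φ x - β * φ x)) :=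
    h.int (((h.ss.pow (m+1)).mul h.sm).mul sG) fun x hx => by rw [hz x hx]; simp
  have e12 := h.i12 (m+1)
  have e3 := h.i3 (m+1)
  have e4 := h.i4 (m+2)
  have e4' := h.i4 (m+1)
  have e3' := h.i3 m
  -- expansions
  have xG : ∫ x, s x ^ (m+2) * (Nn p φ x - β * φ x) ^ 2 =
      (∫ x, s x ^ (m+2) * Nn p φ x ^ 2) - 2 * β * (∫ x, s x ^ (m+2) * φ x * Nn p φ x)
        + β ^ 2 * ∫ x, s x ^ (m+2) * φ x ^ 2 := by
    rw [← integral_const_mul, ← integral_const_mul, ← integral_sub J2 (J5.const_mul _),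
      ← integral_add (by exact J2.sub (J5.const_mul _)) (J6.const_mul _)]
    exact integral_congr_ae (Filter.Eventually.of_forall fun x => by simp only; ring)
  have xGL : ∫ x, s x ^ (m+1) * (Nn p φ x - β * φ x) * Lp0 φ x =
      (∫ x, s x ^ (m+1) * Nn p φ x * Lp0 φ x) - β * ∫ x, s x ^ (m+1) * φ x * Lp0 φ x := by
    rw [← integral_const_mul, ← integral_sub J1 (J4.const_mul _)]
    exact integral_congr_ae (Filter.Eventually.of_forall fun x => by simp only; ring)
  have xGφ : ∫ x, s x ^ (m+1) * φ x * (Nn p φ x - β * φ x) =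
      (∫ x, s x ^ (m+1) * φ x * Nn p φ x) - β * ∫ x, s x ^ (m+1) * φ x ^ 2 := by
    rw [← integral_const_mul, ← integral_sub J7 (J8.const_mul _)]
    exact integral_congr_ae (Filter.Eventually.of_forall fun x => by simp only; ring)
  -- inequalities
  have q1 : ∫ x, s x ^ (m+1) * (Nn p φ x - β * φ x) * Lp0 φ x ≤
      1 / 2 * (∫ x, s x ^ (m+2) * (Nn p φ x - β * φ x) ^ 2)
        + 1 / 2 * ∫ x, s x ^ m * Lp0 φ x ^ 2 := by
    rw [← integral_const_mul, ← integral_const_mul,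
      ← integral_add (JG.const_mul _) (JD.const_mul _)]
    refine integral_mono JGL ((JG.const_mul _).add (JD.const_mul _)) fun x => ?_
    have h0 : 0 ≤ s x ^ m * (s x * (Nn p φ x - β * φ x) - Lp0 φ x) ^ 2 :=
      mul_nonneg (pow_nonneg (h.pos x).le _) (sq_nonneg _)
    simp only [Pi.add_apply]
    rw [pow_succ, pow_add]
    nlinarith
  have q2 : -(1 / 2 * ∫ x, s x ^ (m+1) * φ x ^ 2)
      - R / 2 * (∫ x, s x ^ (m+2) * (Nn p φ x - β * φ x) ^ 2)
      ≤ ∫ x, s x ^ (m+1) * φ x * (Nn p φ x - β * φ x) := by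
    rw [← integral_const_mul, ← integral_const_mul, ← integral_neg,
      ← integral_sub (by exact (J8.const_mul _).neg) (JG.const_mul _)]
    refine integral_mono ((J8.const_mul _).neg.sub (JG.const_mul _)) JGφ fun x => ?_
    simp only [Pi.sub_apply, Pi.neg_apply]
    by_cases hx : x ∈ tsupport φ
    · have h1 : s x ^ (m+1) * (Nn p φ x - β * φ x) ^ 2 * 1 ≤
          s x ^ (m+1) * (Nn p φ x - β * φ x) ^ 2 * (R * s x) :=
        mul_le_mul_of_nonneg_left (hRs x hx)
          (mul_nonneg (pow_nonneg (h.pos x).le _) (sq_nonneg _))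
      have h0 : 0 ≤ s x ^ (m+1) * (φ x + (Nn p φ x - β * φ x)) ^ 2 :=
        mul_nonneg (pow_nonneg (h.pos x).le _) (sq_nonneg _)
      rw [pow_succ (s x) (m+1)]
      nlinarith
    · simp [hz x hx, Nn_zero p hx]
  have q3 : -(1 / 2 * ∫ x, s x ^ m * Lp0 φ x ^ 2)
      - R / 2 * (∫ x, s x ^ (m+1) * φ x ^ 2) ≤ ∫ x, s x ^ m * φ x * Lp0 φ x := by
    rw [← integral_const_mul, ← integral_const_mul, ← integral_neg,
      ← integral_sub (by exact (JD.const_mul _).neg) (J8.const_mul _)]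
    refine integral_mono ((JD.const_mul _).neg.sub (J8.const_mul _)) J10 fun x => ?_
    simp only [Pi.sub_apply, Pi.neg_apply]
    by_cases hx : x ∈ tsupport φ
    · have h1 : s x ^ m * φ x ^ 2 * 1 ≤ s x ^ m * φ x ^ 2 * (R * s x) :=
        mul_le_mul_of_nonneg_left (hRs x hx)
          (mul_nonneg (pow_nonneg (h.pos x).le _) (sq_nonneg _))
      have h0 : 0 ≤ s x ^ m * (φ x + Lp0 φ x) ^ 2 :=
        mul_nonneg (pow_nonneg (h.pos x).le _) (sq_nonneg _)
      rw [pow_succ (s x) m]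
      nlinarith
    · simp [hz x hx, Lp0_zero hx]
  have hS0 : 0 ≤ ∫ x, s x ^ (m+2) * (Nn p φ x - β * φ x) ^ 2 :=
    integral_nonneg fun x => mul_nonneg (pow_nonneg (h.pos x).le _) (sq_nonneg _)
  have hD0 : 0 ≤ ∫ x, s x ^ m * Lp0 φ x ^ 2 :=
    integral_nonneg fun x => mul_nonneg (pow_nonneg (h.pos x).le _) (sq_nonneg _)
  have h80 : 0 ≤ ∫ x, s x ^ (m+1) * φ x ^ 2 :=
    integral_nonneg fun x => mul_nonneg (pow_nonneg (h.pos x).le _) (sq_nonneg _)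
  push_cast at e12 e3 e4 e4'
  rw [show m + 1 + 1 = m + 2 from rfl] at e12 e3
  generalize (∫ x, s x ^ (m+2) * (Nn p φ x - β * φ x) ^ 2) = S at *
  generalize (∫ x, s x ^ (m+1) * (Nn p φ x - β * φ x) * Lp0 φ x) = T at *
  generalize (∫ x, s x ^ (m+1) * φ x * (Nn p φ x - β * φ x)) = U at *
  generalize (∫ x, s x ^ m * Lp0 φ x ^ 2) = D at *
  generalize (∫ x, s x ^ (m+1) * φ x ^ 2) = a8 at *
  generalize (∫ x, s x ^ m * φ x * Lp0 φ x) = a10 at *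
  generalize (∫ x, s x ^ m * Qn φ x) = a9 at *
  generalize (∫ x, s x ^ (m+1) * φ x * Nn p φ x) = a7 at *
  generalize (∫ x, s x ^ (m+2) * φ x ^ 2) = a6 at *
  generalize (∫ x, s x ^ (m+2) * φ x * Nn p φ x) = a5 at *
  generalize (∫ x, s x ^ (m+1) * φ x * Lp0 φ x) = a4 at *
  generalize (∫ x, s x ^ (m+1) * Qn φ x) = a3 at *
  generalize (∫ x, s x ^ (m+2) * Nn p φ x ^ 2) = a2 at *
  generalize (∫ x, s x ^ (m+1) * Nn p φ x * Lp0 φ x) = a1 at *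
  have hm : (0 : ℝ) ≤ m := Nat.cast_nonneg m
  have f5 : a5 = β * a6 := by rw [hβ]; linear_combination e4 / 2
  have f7 : a7 = (β - 1) * a8 := by rw [hβ]; linear_combination e4' / 2
  have fT : T = 2 * (m + 1) * S := by
    rw [xGL, xG]
    rw [show (1 : ℝ) + (m + 1) - n / 2 = β by rw [hβ]; ring] at e12
    linear_combination e12 - β * e3 + 2 * (m + 1) * β * f5
  have fS : S ≤ D := by nlinarith
  have f8 : a8 ≤ R * D := by
    have : U = - a8 := by rw [xGφ, f7]; ring
    have h2 : R * S ≤ R * D := mul_le_mul_of_nonneg_left fS hR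
    linarith
  have f9 : a9 ≤ (2 * m * |β - 1| + R / 2) * a8 + 1 / 2 * D := by
    have : (β - 1) * a8 ≤ |β - 1| * a8 := mul_le_mul_of_nonneg_right (le_abs_self _) h80
    have h3 : 2 * m * ((β - 1) * a8) ≤ 2 * m * (|β - 1| * a8) :=
      mul_le_mul_of_nonneg_left this (by positivity)
    rw [f7] at e3'
    linarith
  have hc : 0 ≤ 2 * m * |β - 1| + R / 2 := by positivity
  have := mul_le_mul_of_nonneg_left f8 hc
  rw [show (1 : ℝ) + m - n / 2 = β - 1 by rw [hβ]; ring]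
  linarith

lemma exists_wt (hφ : Sm φ) (hc : HasCompactSupport φ) (hp : p ∉ tsupport φ) :
    ∃ s, Wt p φ s := by
  obtain ⟨δ, hδ, hδ'⟩ := Metric.isOpen_iff.1 (isClosed_tsupport φ).isOpen_compl p hp
  let χ : ContDiffBump p := ⟨δ / 3, δ / 2, by positivity, by linarith⟩
  have hτ : ∀ x : En n, 0 < (∑ i, (x i - p i) ^ 2) + χ x := by
    intro x
    have h1 : 0 ≤ ∑ i, (x i - p i) ^ 2 := Finset.sum_nonneg fun i _ => sq_nonneg _
    have h2 : 0 ≤ χ x := χ.nonneg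
    rcases h1.lt_or_eq with h | h
    · linarith
    · have hx : x = p := by
        ext i
        have := (Finset.sum_eq_zero_iff_of_nonneg (fun i _ => sq_nonneg (x i - p i))).1 h.symm i
          (Finset.mem_univ i)
        nlinarith
      have : χ x = 1 := χ.one_of_mem_closedBall (by
        rw [hx]; exact Metric.mem_closedBall_self χ.rIn_pos.le)
      linarith
  have sτ : Sm (fun x : En n => (∑ i, (x i - p i) ^ 2) + χ x) :=
    (ContDiff.sum fun i _ => (sm_coord p i).pow 2).add χ.contDiff
  refine ⟨fun x => ((∑ i, (x i - p i) ^ 2) + χ x)⁻¹, hφ, hc, sτ.inv fun x => (hτ x).ne',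
    fun x => inv_pos.2 (hτ x), fun x hx => ?_⟩
  have hd : δ ≤ dist x p := by
    by_contra hlt
    exact hδ' (Metric.mem_ball.2 (not_le.1 hlt)) hx
  have : ∀ᶠ z in nhds x, χ.rOut < dist z p := by
    refine (continuous_id.dist continuous_const).continuousAt.eventually_const_lt ?_
    change δ / 2 < dist x p
    linarith
  filter_upwards [this] with z hz
  have h0 : χ z = 0 := χ.zero_of_le_dist hz.le
  have := hτ z
  rw [h0, add_zero] at this ⊢
  exact inv_mul_cancel₀ this.ne'

lemma int_supp {f φ : En n → ℝ} (hc : HasCompactSupport φ) (hf : ContinuousOn f (tsupport φ))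
    (h0 : ∀ x, x ∉ tsupport φ → f x = 0) : Integrable f := by
  have h1 : IntegrableOn f (tsupport φ) := hf.integrableOn_compact hc.isCompact
  rwa [integrableOn_iff_integrable_of_support_subset] at h1
  intro x hx
  by_contra h
  exact hx (h0 x h)

lemma sum_sq_dist (x p : En n) : ∑ i, (x i - p i) ^ 2 = dist x p ^ 2 := by
  rw [dist_eq_norm, EuclideanSpace.real_norm_sq_eq]
  simp

lemma d_pos {Ω : Set (En n)} (hΩ : IsOpen Ω) (hne : Ωᶜ.Nonempty) {x : En n} (hx : x ∈ Ω) :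
    0 < infDist x Ωᶜ :=
  (hΩ.isClosed_compl.notMem_iff_infDist_pos hne).1 (fun h => h hx)

lemma cont_dinv {Ω : Set (En n)} (hΩ : IsOpen Ω) (hne : Ωᶜ.Nonempty) :
    ContinuousOn (fun x => (infDist x Ωᶜ)⁻¹) Ω :=
  (continuous_infDist_pt _).continuousOn.inv₀ fun _ hx => (d_pos hΩ hne hx).ne'

lemma stepA {Ω : Set (En n)} (hΩ : IsOpen Ω) (hne : Ωᶜ.Nonempty) (m : ℕ) (R : ℝ) (hR : 0 ≤ R)
    (hφ : Sm φ) (hc : HasCompactSupport φ) (hs : tsupport φ ⊆ Ω) (hp : p ∉ Ω)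
    (hRp : ∀ z ∈ Ω, dist z p ≤ R) (j : Fin n) {B : Set (En n)} (hB : MeasurableSet B) {t : ℝ}
    (hBt : ∀ z ∈ B, dist z p ≤ t) :
    ∫ z in B, pd j φ z ^ 2 ≤ t ^ (2 * m) *
      (((2 * m * |1 + m - (n : ℝ) / 2| + R ^ 2 / 2) * R ^ 2 + 1 / 2) *
      ∫ z, ((infDist z Ωᶜ)⁻¹ ^ m * Lp0 φ z) ^ 2) := by
  obtain ⟨s, h⟩ := exists_wt hφ hc (fun h => hp (hs h))
  have key := h.main m (R ^ 2) (sq_nonneg R) (fun x hx => by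
    have h1 := h.eq1 hx
    rw [sum_sq_dist] at h1
    have h2 : dist x p ^ 2 ≤ R ^ 2 := pow_le_pow_left₀ dist_nonneg (hRp x (hs hx)) 2
    have := mul_le_mul_of_nonneg_left h2 (h.pos x).le
    linarith)
  have JQ : Integrable (fun x => s x ^ m * Qn φ x) :=
    h.int ((h.ss.pow m).mul hφ.Qn) fun x hx => by rw [Qn_zero hx]; simp
  have JD : Integrable (fun x => s x ^ m * Lp0 φ x ^ 2) :=
    h.int ((h.ss.pow m).mul (hφ.Lp0.pow 2)) fun x hx => by rw [Lp0_zero hx]; simp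
  have JP : Integrable (fun x => pd j φ x ^ 2) :=
    h.int ((hφ.pd j).pow 2) fun x hx => by rw [pd_zero j hx]; simp
  have JE : Integrable (fun z => ((infDist z Ωᶜ)⁻¹ ^ m * Lp0 φ z) ^ 2) :=
    int_supp hc (((((cont_dinv hΩ hne).mono hs).pow m).mul hφ.Lp0.continuous.continuousOn).pow 2)
      fun x hx => by rw [Lp0_zero hx]; simp
  have hQ0 : ∀ x, 0 ≤ Qn φ x := fun x => Finset.sum_nonneg fun i _ => sq_nonneg _
  have s1 : ∫ z in B, pd j φ z ^ 2 ≤ ∫ z in B, t ^ (2 * m) * (s z ^ m * Qn φ z) := by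
    refine setIntegral_mono_on JP.integrableOn (JQ.const_mul _).integrableOn hB fun z hz => ?_
    by_cases hx : z ∈ tsupport φ
    · have h1 := h.eq1 hx
      rw [sum_sq_dist] at h1
      have h2 : 1 ≤ t ^ (2 * m) * s z ^ m := by
        rw [pow_mul, ← mul_pow]
        refine one_le_pow₀ ?_
        have h3 : dist z p ^ 2 ≤ t ^ 2 := pow_le_pow_left₀ dist_nonneg (hBt z hz) 2
        have := mul_le_mul_of_nonneg_left h3 (h.pos z).le
        linarith
      have h4 : pd j φ z ^ 2 ≤ Qn φ z :=
        Finset.single_le_sum (f := fun l => pd l φ z ^ 2) (fun i _ => sq_nonneg _)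
          (Finset.mem_univ j)
      calc pd j φ z ^ 2 ≤ 1 * Qn φ z := by linarith
        _ ≤ (t ^ (2 * m) * s z ^ m) * Qn φ z := mul_le_mul_of_nonneg_right h2 (hQ0 z)
        _ = _ := by ring
    · simp [pd_zero j hx, Qn_zero hx]
  have ht : 0 ≤ t ^ (2 * m) := by rw [pow_mul]; positivity
  have s2 : ∫ z in B, t ^ (2 * m) * (s z ^ m * Qn φ z) ≤ t ^ (2 * m) * ∫ z, s z ^ m * Qn φ z := by
    rw [integral_const_mul]
    refine mul_le_mul_of_nonneg_left (setIntegral_le_integral JQ ?_) ht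
    exact Filter.Eventually.of_forall fun z => mul_nonneg (pow_nonneg (h.pos z).le _) (hQ0 z)
  have s3 : ∫ z, s z ^ m * Lp0 φ z ^ 2 ≤ ∫ z, ((infDist z Ωᶜ)⁻¹ ^ m * Lp0 φ z) ^ 2 := by
    refine integral_mono JD JE fun z => ?_
    by_cases hx : z ∈ tsupport φ
    · have h1 := h.eq1 hx
      rw [sum_sq_dist] at h1
      have hd := d_pos hΩ hne (hs hx)
      have h2 : infDist z Ωᶜ ≤ dist z p := infDist_le_dist_of_mem hp
      have h3 : s z ≤ (infDist z Ωᶜ)⁻¹ ^ 2 := by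
        rw [inv_pow, ← one_div, le_div_iff₀ (by positivity), ← h1]
        exact mul_le_mul_of_nonneg_left (pow_le_pow_left₀ hd.le h2 2) (h.pos z).le
      have h4 : s z ^ m ≤ ((infDist z Ωᶜ)⁻¹ ^ 2) ^ m := pow_le_pow_left₀ (h.pos z).le h3 m
      calc s z ^ m * Lp0 φ z ^ 2 ≤ ((infDist z Ωᶜ)⁻¹ ^ 2) ^ m * Lp0 φ z ^ 2 :=
            mul_le_mul_of_nonneg_right h4 (sq_nonneg _)
        _ = _ := by ring
    · simp [Lp0_zero hx]
  refine s1.trans (s2.trans (mul_le_mul_of_nonneg_left (key.trans ?_) ht))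
  exact mul_le_mul_of_nonneg_left s3 (by positivity)

set_option maxHeartbeats 2000000 in
lemma stepB (n k : ℕ) (hn : 3 ≤ n) (j : Fin n) (Ω : Set (En n)) (hΩ : IsOpen Ω)
    (hΩb : Bornology.IsBounded Ω) (hne : Ωᶜ.Nonempty) :
    ∃ C : ℝ, 0 < C ∧ ∀ φ : En n → ℝ, Sm φ → HasCompactSupport φ → tsupport φ ⊆ Ω →
      ∫ z, ((infDist z Ωᶜ)⁻¹ ^ k * pd j φ z) ^ 2 ≤
        C * ∫ z, ((infDist z Ωᶜ)⁻¹ ^ (k + n - 1) * Lp0 φ z) ^ 2 := by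
  obtain ⟨p0, hp0⟩ := hne
  have hne : Ωᶜ.Nonempty := ⟨p0, hp0⟩
  obtain ⟨R0, hR0⟩ := hΩb.subset_ball p0
  have hR0' : ∀ z ∈ Ω, dist z p0 ≤ |R0| := fun z hz =>
    (Metric.mem_ball.1 (hR0 hz)).le.trans (le_abs_self _)
  set R : ℝ := 4 * |R0| with hRdef
  have hR : 0 ≤ R := by positivity
  set m := k + n - 1 with hm
  set K : ℝ := ((2 * m * |1 + m - (n : ℝ) / 2| + R ^ 2 / 2) * R ^ 2 + 1 / 2) with hK
  have hK0 : 0 ≤ K := by positivity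
  have hd : ∀ z ∈ Ω, infDist z Ωᶜ ≤ |R0| := fun z hz =>
    (infDist_le_dist_of_mem hp0).trans (hR0' z hz)
  set ω : ℝ := (volume (ball (0 : En n) 1)).toReal with hω
  have hωfin : volume (ball (0 : En n) 1) ≠ ⊤ := measure_ball_lt_top.ne
  have hω0 : 0 < ω := ENNReal.toReal_pos (measure_ball_pos _ _ one_pos).ne' hωfin
  set V : ℝ := (volume Ω).toReal with hV
  have hVfin : volume Ω ≠ ⊤ := hΩb.measure_lt_top.ne
  set c : ℝ := 2⁻¹ ^ (n + 2 * k) * 4⁻¹ ^ n * ω with hc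
  have hc0 : 0 < c := by positivity
  set K2 : ℝ := (3 / 2) ^ (2 * m) * |R0| ^ (n - 2) * K with hK2
  have hK20 : 0 ≤ K2 := by positivity
  refine ⟨K2 * V / c + 1, by positivity, fun φ hφ hcs hs => ?_⟩
  set M := ∫ z, ((infDist z Ωᶜ)⁻¹ ^ m * Lp0 φ z) ^ 2 with hM
  have hM0 : 0 ≤ M := integral_nonneg fun z => sq_nonneg _
  have JP : Integrable (fun x => pd j φ x ^ 2) :=
    int_supp hcs ((hφ.pd j).pow 2).continuous.continuousOn fun x hx => by rw [pd_zero j hx]; simp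
  have JE : Integrable (fun z => ((infDist z Ωᶜ)⁻¹ ^ k * pd j φ z) ^ 2) :=
    int_supp hcs (((((cont_dinv hΩ hne).mono hs).pow k).mul
      (hφ.pd j).continuous.continuousOn).pow 2)
      fun x hx => by rw [pd_zero j hx]; simp
  -- upper bound at each centre
  have up : ∀ x ∈ Ω, (infDist x Ωᶜ)⁻¹ ^ (n + 2 * k) *
      ∫ z in ball x (infDist x Ωᶜ / 2), pd j φ z ^ 2 ≤ K2 * M := by
    intro x hx
    obtain ⟨p, hp, hpd⟩ := hΩ.isClosed_compl.exists_infDist_eq_dist hne x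
    have hd0 := d_pos hΩ hne hx
    have := stepA hΩ hne m R hR hφ hcs hs hp (fun z hz => by
        have h1 : dist z p ≤ dist z p0 + dist p0 x + dist x p := dist_triangle4 _ _ _ _
        have h2 := hR0' z hz
        have h3 := hR0' x hx
        rw [dist_comm] at h3
        have h4 := hd x hx
        rw [hpd] at h4
        have := abs_nonneg R0
        linarith) j (measurableSet_ball (x := x) (ε := infDist x Ωᶜ / 2))
        (t := 3 / 2 * infDist x Ωᶜ) (fun z hz => by
        have h1 := dist_triangle z x p
        have h2 := Metric.mem_ball.1 hz
        linarith)
    calc _ ≤ (infDist x Ωᶜ)⁻¹ ^ (n + 2 * k) * ((3 / 2 * infDist x Ωᶜ) ^ (2 * m) * (K * M)) :=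
          mul_le_mul_of_nonneg_left this (by positivity)
      _ = (3 / 2) ^ (2 * m) * (infDist x Ωᶜ) ^ (n - 2) * K * M := by
          have : 2 * m = (n + 2 * k) + (n - 2) := by omega
          rw [mul_pow, inv_pow]
          have e : infDist x Ωᶜ ^ (2 * m) = infDist x Ωᶜ ^ (n + 2 * k) * infDist x Ωᶜ ^ (n - 2) := by
            rw [this, pow_add]
          rw [e]
          field_simp
      _ ≤ K2 * M := by
          have h5 := pow_le_pow_left₀ hd0.le (hd x hx) (n - 2)
          exact mul_le_mul_of_nonneg_right (mul_le_mul_of_nonneg_right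
            (mul_le_mul_of_nonneg_left h5 (by positivity)) hK0) hM0
  set f : En n → ENNReal := fun z => ENNReal.ofReal (pd j φ z ^ 2) with hf
  have hfm : Measurable f := ((hφ.pd j).continuous.pow 2).measurable.ennreal_ofReal
  set g : En n → ENNReal := fun x => ENNReal.ofReal ((infDist x Ωᶜ)⁻¹ ^ (n + 2 * k)) with hg
  have hgm : Measurable g :=
    ((continuous_infDist_pt _).measurable.inv.pow_const _).ennreal_ofReal
  set S : Set (En n × En n) := {q | dist q.2 q.1 < infDist q.1 Ωᶜ / 2} with hS
  have hSo : IsOpen S := isOpen_lt (by fun_prop)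
    (((continuous_infDist_pt _).comp continuous_fst).div_const 2)
  have hSm : MeasurableSet S := hSo.measurableSet
  set H : En n × En n → ENNReal := S.indicator fun q => g q.1 * f q.2 with hH
  have hHm : Measurable H :=
    ((hgm.comp measurable_fst).mul (hfm.comp measurable_snd)).indicator hSm
  have U1 : ∫⁻ x in Ω, ∫⁻ z, H (x, z) ≤ ENNReal.ofReal (K2 * M * V) := by
    calc ∫⁻ x in Ω, ∫⁻ z, H (x, z) ≤ ∫⁻ x in Ω, ENNReal.ofReal (K2 * M) := by
          refine setLIntegral_mono measurable_const fun x hx => ?_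
          have e : ∀ z, H (x, z) = g x * (ball x (infDist x Ωᶜ / 2)).indicator f z := by
            intro z
            by_cases h : dist z x < infDist x Ωᶜ / 2
            · rw [hH, Set.indicator_of_mem (show (x, z) ∈ S from h),
                Set.indicator_of_mem (show z ∈ ball _ _ from h)]
            · rw [hH, Set.indicator_of_notMem (show (x, z) ∉ S from h),
                Set.indicator_of_notMem (show z ∉ ball _ _ from h), mul_zero]
          simp_rw [e]
          rw [lintegral_const_mul _ (hfm.indicator measurableSet_ball),
            lintegral_indicator measurableSet_ball, hf,
            ← ofReal_integral_eq_lintegral_ofReal JP.integrableOn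
              (Filter.Eventually.of_forall fun z => sq_nonneg _), hg]
          simp only
          rw [← ENNReal.ofReal_mul (pow_nonneg (inv_nonneg.2 infDist_nonneg) _)]
          exact ENNReal.ofReal_le_ofReal (up x hx)
      _ = ENNReal.ofReal (K2 * M * V) := by
          rw [setLIntegral_const, hV, ENNReal.ofReal_mul (mul_nonneg hK20 hM0),
            ENNReal.ofReal_toReal hVfin]
  have U2 : ∫⁻ x in Ω, ∫⁻ z, H (x, z) = ∫⁻ z, ∫⁻ x in Ω, H (x, z) :=
    lintegral_lintegral_swap hHm.aemeasurable
  have U3 : ENNReal.ofReal (c * ∫ z, ((infDist z Ωᶜ)⁻¹ ^ k * pd j φ z) ^ 2) ≤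
      ∫⁻ z, ∫⁻ x in Ω, H (x, z) := by
    rw [ENNReal.ofReal_mul hc0.le, ofReal_integral_eq_lintegral_ofReal JE
      (Filter.Eventually.of_forall fun z => sq_nonneg _),
      ← lintegral_const_mul' _ _ ENNReal.ofReal_ne_top]
    refine lintegral_mono fun z => ?_
    by_cases hz : z ∈ tsupport φ
    swap
    · simp [pd_zero j hz]
    have hzΩ := hs hz
    have hdz := d_pos hΩ hne hzΩ
    have hL : ∀ x, x ∈ ball z (infDist z Ωᶜ / 4) →
        x ∈ Ω ∧ infDist x Ωᶜ ≤ 2 * infDist z Ωᶜ ∧ dist z x < infDist x Ωᶜ / 2 := by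
      intro x hx
      have hx := Metric.mem_ball.1 hx
      have h1 : infDist z Ωᶜ ≤ infDist x Ωᶜ + dist z x := infDist_le_infDist_add_dist
      have h2 : infDist x Ωᶜ ≤ infDist z Ωᶜ + dist x z := infDist_le_infDist_add_dist
      rw [dist_comm z x] at h1
      refine ⟨?_, by linarith, by rw [dist_comm]; linarith⟩
      by_contra h
      have := infDist_zero_of_mem (s := Ωᶜ) h
      linarith
    calc ENNReal.ofReal c * ENNReal.ofReal (((infDist z Ωᶜ)⁻¹ ^ k * pd j φ z) ^ 2)
        = ∫⁻ x in ball z (infDist z Ωᶜ / 4),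
            ENNReal.ofReal ((2 * infDist z Ωᶜ)⁻¹ ^ (n + 2 * k) * pd j φ z ^ 2) := by
          rw [setLIntegral_const, Measure.addHaar_ball_of_pos _ _ (by positivity),
            ← ENNReal.ofReal_toReal hωfin, ← hω, finrank_euclideanSpace, Fintype.card_fin,
            ← ENNReal.ofReal_mul (by positivity), ← ENNReal.ofReal_mul (by positivity),
            ← ENNReal.ofReal_mul (by positivity)]
          congr 1
          rw [hc]
          simp only [mul_pow, inv_pow, div_pow, mul_inv]
          rw [pow_add (infDist z Ωᶜ)]
          field_simp
          try ring
      _ ≤ ∫⁻ x in ball z (infDist z Ωᶜ / 4), H (x, z) := by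
          refine setLIntegral_mono (hHm.comp (measurable_id.prodMk measurable_const))
            fun x hx => ?_
          obtain ⟨h1, h2, h3⟩ := hL x hx
          have hdx := d_pos hΩ hne h1
          rw [hH, Set.indicator_of_mem (show (x, z) ∈ S from h3)]
          simp only [hg, hf]
          rw [← ENNReal.ofReal_mul (by positivity)]
          refine ENNReal.ofReal_le_ofReal (mul_le_mul_of_nonneg_right ?_ (sq_nonneg _))
          exact pow_le_pow_left₀ (by positivity) (inv_anti₀ hdx h2) _
      _ ≤ ∫⁻ x in Ω, H (x, z) := lintegral_mono_set fun x hx => (hL x hx).1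
  have fin := U3.trans (U2.symm.le.trans U1)
  rw [ENNReal.ofReal_le_ofReal_iff (by positivity)] at fin
  have h1 : ∫ z, ((infDist z Ωᶜ)⁻¹ ^ k * pd j φ z) ^ 2 ≤ K2 * V / c * M := by
    rw [div_mul_eq_mul_div, le_div_iff₀ hc0]
    linarith
  linarith

lemma riesz_aux {V H : Type*} [AddCommGroup V] [Module ℝ V] [NormedAddCommGroup H]
    [InnerProductSpace ℝ H] [CompleteSpace H] (A : V →ₗ[ℝ] H) (l : V →ₗ[ℝ] ℝ) (M : ℝ)
    (hM : 0 ≤ M) (h : ∀ x, |l x| ≤ M * ‖A x‖) :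
    ∃ g : H, ‖g‖ ≤ M ∧ ∀ x, inner ℝ g (A x) = l x := by
  obtain ⟨B, hB⟩ := A.rangeRestrict.exists_rightInverse_of_surjective
    (LinearMap.range_rangeRestrict A)
  have hB' : ∀ y, A (B y) = y := fun y => by
    have := congrArg (fun T => ((T y : LinearMap.range A) : H)) hB
    simpa using this
  let l' : LinearMap.range A →L[ℝ] ℝ := (l ∘ₗ B).mkContinuous M fun y => by
    have := h (B y)
    rw [hB'] at this
    simpa using this
  have hl' : ∀ x, l' (A.rangeRestrict x) = l x := by
    intro x
    have h1 := h (B (A.rangeRestrict x) - x)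
    rw [map_sub A, hB'] at h1
    simp at h1
    change l (B (A.rangeRestrict x)) = l x
    linarith
  obtain ⟨G, hG, hGn⟩ := exists_extension_norm_eq (LinearMap.range A) l'
  refine ⟨(InnerProductSpace.toDual ℝ H).symm G, ?_, fun x => ?_⟩
  · rw [LinearIsometryEquiv.norm_map, hGn]
    exact LinearMap.mkContinuous_norm_le _ hM _
  · rw [InnerProductSpace.toDual_symm_apply]
    rw [← hl' x, ← hG]
    rfl

lemma inner_toLp {X : Type*} [MeasurableSpace X] {μ : Measure X} {f g : X → ℝ} (hf : MemLp f 2 μ)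
    (hg : MemLp g 2 μ) : inner ℝ (hf.toLp f) (hg.toLp g) = ∫ x, f x * g x ∂μ := by
  rw [L2.inner_def]
  refine integral_congr_ae ?_
  filter_upwards [hf.coeFn_toLp, hg.coeFn_toLp] with x h1 h2
  rw [h1, h2]
  simp [mul_comm]

lemma normsq_toLp {X : Type*} [MeasurableSpace X] {μ : Measure X} {f : X → ℝ}
    (hf : MemLp f 2 μ) : ‖hf.toLp f‖ ^ 2 = ∫ x, f x ^ 2 ∂μ := by
  rw [← real_inner_self_eq_norm_sq, inner_toLp hf hf]
  simp_rw [sq]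

/-- test functions supported in `Ω` -/
def testSub (Ω : Set (En n)) : Submodule ℝ (En n → ℝ) where
  carrier := {φ | IsTest φ ∧ tsupport φ ⊆ Ω}
  zero_mem' := ⟨⟨contDiff_const, HasCompactSupport.zero⟩, by simp [tsupport]⟩
  add_mem' := fun {a b} ha hb => ⟨⟨ha.1.1.add hb.1.1, ha.1.2.add hb.1.2⟩,
    (tsupport_add a b).trans (Set.union_subset ha.2 hb.2)⟩
  smul_mem' := fun c a ha => ⟨⟨contDiff_const.smul ha.1.1,
      ha.1.2.of_isClosed_subset (isClosed_tsupport _) (tsupport_smul_subset_right (fun _ => c) a)⟩,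
    (tsupport_smul_subset_right (fun _ => c) a).trans ha.2⟩

/-- linear map into `L²` -/
def toL2 {V X : Type*} [AddCommGroup V] [Module ℝ V] [MeasurableSpace X] {μ : Measure X}
    (u : V → X → ℝ) (hu : ∀ a, MemLp (u a) 2 μ) (h1 : ∀ a b, u (a + b) = u a + u b)
    (h2 : ∀ (c : ℝ) a, u (c • a) = c • u a) : V →ₗ[ℝ] Lp ℝ 2 μ where
  toFun a := (hu a).toLp (u a)
  map_add' a b := by
    rw [← MemLp.toLp_add]
    congr 1
    exact h1 a b
  map_smul' c a := by
    simp only [RingHom.id_apply]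
    rw [← MemLp.toLp_const_smul]
    congr 1
    exact h2 c a

lemma pd_addf {f g : En n → ℝ} (hf : Sm f) (hg : Sm g) (i : Fin n) :
    pd i (f + g) = pd i f + pd i g := funext fun x => pd_add hf hg i x

lemma pd_smulf {f : En n → ℝ} (c : ℝ) (hf : Sm f) (i : Fin n) :
    pd i (c • f) = c • pd i f := funext fun x => pd_const_mul c hf i x

lemma Lp0_addf {f g : En n → ℝ} (hf : Sm f) (hg : Sm g) : Lp0 (f + g) = Lp0 f + Lp0 g := by
  funext x
  simp only [Lp0, Pi.add_apply, ← Finset.sum_add_distrib]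
  refine Finset.sum_congr rfl fun i _ => ?_
  rw [pd_addf hf hg, pd_addf (hf.pd i) (hg.pd i)]
  rfl

lemma Lp0_smulf {f : En n → ℝ} (c : ℝ) (hf : Sm f) : Lp0 (c • f) = c • Lp0 f := by
  funext x
  simp only [Lp0, Pi.smul_apply, Finset.smul_sum]
  refine Finset.sum_congr rfl fun i _ => ?_
  rw [pd_smulf c hf, pd_smulf c (hf.pd i)]
  rfl

lemma set_full {Ω : Set (En n)} {φ f : En n → ℝ} (hs : tsupport φ ⊆ Ω)
    (h0 : ∀ x, x ∉ tsupport φ → f x = 0) : ∫ z in Ω, f z = ∫ z, f z :=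
  setIntegral_eq_integral_of_forall_compl_eq_zero fun x hx => h0 x fun h => hx (hs h)

lemma memLp_supp {Ω : Set (En n)} (hΩ : IsOpen Ω) (hne : Ωᶜ.Nonempty) {φ f : En n → ℝ}
    (hc : HasCompactSupport φ) (hs : tsupport φ ⊆ Ω) (a : ℕ) (hf : Continuous f)
    (h0 : ∀ x, x ∉ tsupport φ → f x = 0) :
    MemLp (fun z => (infDist z Ωᶜ)⁻¹ ^ a * f z) 2 (volume.restrict Ω) := by
  have h1 : ContinuousOn (fun z => (infDist z Ωᶜ)⁻¹ ^ a * f z) (tsupport φ) :=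
    (((cont_dinv hΩ hne).mono hs).pow a).mul hf.continuousOn
  have i1 := int_supp hc h1 fun x hx => by rw [h0 x hx, mul_zero]
  have i2 := int_supp (f := fun z => ((infDist z Ωᶜ)⁻¹ ^ a * f z) ^ 2) hc (h1.pow 2)
    fun x hx => by rw [h0 x hx]; simp
  rw [memLp_two_iff_integrable_sq i1.integrableOn.aestronglyMeasurable]
  exact i2.integrableOn

/-- let `Ω ⊂ ℝⁿ` be bounded open of diameter `< 1` and `k ∈ ℕ`.
For every `w ∈ L²_loc(Ω)` with `‖w‖_k² = ∫_Ω |w|² d(z,∂Ω)^{2k} dλ < ∞` there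
is `v` solving `Δv = ∂w/∂x_j` in `𝒟'(Ω)` (stated weakly: for every test `φ`
supported in `Ω`, `∫ v Δφ = -∫ w ∂_j φ`) with
`‖v‖²_{k+n-1} ≤ C(Ω,k,n) ‖w‖_k²`. -/
theorem laplace_weighted_solution
    (n k : ℕ) (hn : 3 ≤ n) (j : Fin n)
    (Ω : Set (En n)) (hΩo : IsOpen Ω) (hΩb : Bornology.IsBounded Ω)
    (hdiam : diam Ω < 1) :
    ∃ C : ℝ, 0 < C ∧
      ∀ w : En n → ℝ, AEStronglyMeasurable w (volume.restrict Ω) →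
        IntegrableOn (fun z => w z ^ 2 * (infDist z Ωᶜ) ^ (2 * k)) Ω →
        ∃ v : En n → ℝ,
          (∀ φ : En n → ℝ, IsTest φ → tsupport φ ⊆ Ω →
            (∫ z in Ω, v z * lapR φ z) =
              -∫ z in Ω, w z * fderiv ℝ φ z (EuclideanSpace.single j 1)) ∧
          IntegrableOn
            (fun z => v z ^ 2 * (infDist z Ωᶜ) ^ (2 * (k + n - 1))) Ω ∧
          (∫ z in Ω, v z ^ 2 * (infDist z Ωᶜ) ^ (2 * (k + n - 1))) ≤
            C * ∫ z in Ω, w z ^ 2 * (infDist z Ωᶜ) ^ (2 * k) := by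
  have hne : Ωᶜ.Nonempty := by
    rw [Set.nonempty_compl]
    rintro rfl
    have : Nonempty (Fin n) := ⟨j⟩
    exact NormedSpace.unbounded_univ ℝ (En n) hΩb
  obtain ⟨C, hC, hmain⟩ := stepB n k hn j Ω hΩo hΩb hne
  refine ⟨C, hC, fun w hw hwi => ?_⟩
  set m := k + n - 1 with hm
  have hdp : ∀ z ∈ Ω, 0 < infDist z Ωᶜ := fun z hz => d_pos hΩo hne hz
  have hWm : MemLp (fun z => w z * infDist z Ωᶜ ^ k) 2 (volume.restrict Ω) := by
    have hmeas : AEStronglyMeasurable (fun z => w z * infDist z Ωᶜ ^ k) (volume.restrict Ω) :=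
      hw.mul ((continuous_infDist_pt _).pow k).aestronglyMeasurable
    rw [memLp_two_iff_integrable_sq hmeas]
    refine hwi.congr (Filter.Eventually.of_forall fun z => ?_)
    simp only
    ring
  set W := hWm.toLp _ with hW
  have hWn : ‖W‖ ^ 2 = ∫ z in Ω, w z ^ 2 * infDist z Ωᶜ ^ (2 * k) := by
    rw [hW, normsq_toLp]
    refine integral_congr_ae (Filter.Eventually.of_forall fun z => ?_)
    simp only
    ring
  have hAm : ∀ φ : testSub Ω,
      MemLp (fun z => (infDist z Ωᶜ)⁻¹ ^ m * Lp0 φ.1 z) 2 (volume.restrict Ω) := fun φ =>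
    memLp_supp hΩo hne φ.2.1.2 φ.2.2 m (Sm.Lp0 φ.2.1.1).continuous fun x hx => Lp0_zero hx
  have hPm : ∀ φ : testSub Ω,
      MemLp (fun z => (infDist z Ωᶜ)⁻¹ ^ k * pd j φ.1 z) 2 (volume.restrict Ω) := fun φ =>
    memLp_supp hΩo hne φ.2.1.2 φ.2.2 k (Sm.pd φ.2.1.1 j).continuous fun x hx => pd_zero j hx
  let A : testSub Ω →ₗ[ℝ] Lp ℝ 2 (volume.restrict Ω) := toL2 _ hAm
    (fun a b => by
      funext z
      simp only [Submodule.coe_add, Pi.add_apply]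
      rw [Lp0_addf a.2.1.1 b.2.1.1, Pi.add_apply, mul_add])
    (fun c a => by
      funext z
      simp only [Submodule.coe_smul, Pi.smul_apply, smul_eq_mul]
      rw [Lp0_smulf c a.2.1.1, Pi.smul_apply, smul_eq_mul]
      ring)
  let P : testSub Ω →ₗ[ℝ] Lp ℝ 2 (volume.restrict Ω) := toL2 _ hPm
    (fun a b => by
      funext z
      simp only [Submodule.coe_add, Pi.add_apply]
      rw [pd_addf a.2.1.1 b.2.1.1, Pi.add_apply, mul_add])
    (fun c a => by
      funext z
      simp only [Submodule.coe_smul, Pi.smul_apply, smul_eq_mul]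
      rw [pd_smulf c a.2.1.1, Pi.smul_apply, smul_eq_mul]
      ring)
  have hPA : ∀ φ, ‖P φ‖ ^ 2 ≤ C * ‖A φ‖ ^ 2 := by
    intro φ
    have h1 : ‖P φ‖ ^ 2 = ∫ z, ((infDist z Ωᶜ)⁻¹ ^ k * pd j φ.1 z) ^ 2 :=
      (normsq_toLp (hPm φ)).trans (set_full φ.2.2 fun x hx => by rw [pd_zero j hx]; simp)
    have h2 : ‖A φ‖ ^ 2 = ∫ z, ((infDist z Ωᶜ)⁻¹ ^ m * Lp0 φ.1 z) ^ 2 :=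
      (normsq_toLp (hAm φ)).trans (set_full φ.2.2 fun x hx => by rw [Lp0_zero hx]; simp)
    rw [h1, h2]
    exact hmain φ.1 φ.2.1.1 φ.2.1.2 φ.2.2
  obtain ⟨g, hgn, hg⟩ := riesz_aux A (-((innerₛₗ ℝ W) ∘ₗ P)) (‖W‖ * √C) (by positivity) (by
    intro φ
    have h1 : |inner ℝ W (P φ)| ≤ ‖W‖ * ‖P φ‖ := abs_real_inner_le_norm _ _
    have h2 : ‖P φ‖ ≤ √C * ‖A φ‖ := by
      refine abs_le_of_sq_le_sq' ?_ (by positivity) |>.2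
      rw [mul_pow, Real.sq_sqrt hC.le]
      exact hPA φ
    have h3 := mul_le_mul_of_nonneg_left h2 (norm_nonneg W)
    simp only [LinearMap.neg_apply, LinearMap.comp_apply, innerₛₗ_apply_apply, abs_neg]
    linarith)
  have hgm : MemLp g 2 (volume.restrict Ω) := Lp.memLp g
  have hg2 : ∫ z in Ω, g z ^ 2 = ‖g‖ ^ 2 := by
    rw [← normsq_toLp hgm, Lp.toLp_coeFn]
  have hvg : ∀ z ∈ Ω, ((infDist z Ωᶜ)⁻¹ ^ m * g z) ^ 2 * infDist z Ωᶜ ^ (2 * m) = g z ^ 2 := by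
    intro z hz
    have := hdp z hz
    rw [mul_pow, ← pow_mul, mul_comm m 2, inv_pow]
    field_simp
  refine ⟨fun z => (infDist z Ωᶜ)⁻¹ ^ m * g z, fun φ hφ hs => ?_, ?_, ?_⟩
  · have h := hg ⟨φ, hφ, hs⟩
    have hA : A ⟨φ, hφ, hs⟩ = (hAm ⟨φ, hφ, hs⟩).toLp _ := rfl
    have hP : P ⟨φ, hφ, hs⟩ = (hPm ⟨φ, hφ, hs⟩).toLp _ := rfl
    simp only [LinearMap.neg_apply, LinearMap.comp_apply, innerₛₗ_apply_apply] at h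
    rw [hA, hP, ← Lp.toLp_coeFn g hgm, inner_toLp, hW, inner_toLp] at h
    rw [lapR_eq hφ.1]
    refine Eq.trans ?_ (h.trans ?_)
    · refine integral_congr_ae (Filter.Eventually.of_forall fun z => ?_)
      simp only
      ring
    · congr 1
      refine setIntegral_congr_fun hΩo.measurableSet fun z hz => ?_
      have := hdp z hz
      simp only [pd, inv_pow]
      field_simp
  · refine IntegrableOn.congr_fun (f := fun z => g z ^ 2) hgm.integrable_sq
      (fun z hz => (hvg z hz).symm) hΩo.measurableSet
  · rw [setIntegral_congr_fun hΩo.measurableSet hvg, hg2, ← hWn]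
    calc ‖g‖ ^ 2 ≤ (‖W‖ * √C) ^ 2 := pow_le_pow_left₀ (norm_nonneg _) hgn 2
      _ = C * ‖W‖ ^ 2 := by rw [mul_pow, Real.sq_sqrt hC.le]; ring
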